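/- Let x ∈ L be a non-torsion element with normal form x = a_1 e_1 + ⋯ + a_n e_n + a c, and set R := S^x. Then the following are equivalent: (i) for every z ∈ L, the ideal I^z := S(z)^x · S(−z)^x of R (generated by all products st with s ∈ S(z)^x and t ∈ S(−z)^x) satisfies dim_ℂ(R/I^z) < ∞; (ii) gcd(p_i, a_i) = 1 for all 1 ≤ i ≤ n. -/

import Mathlib

set_option synthInstance.maxHeartbeats 1000000
set_option maxHeartbeats 1000000
noncomputable section

open MvPolynomial

def LRel (ι : Type) [DecidableEq ι] (p : ι → ℕ) : AddSubgroup (Option ι → ℤ) :=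
  AddSubgroup.closure
    { v | ∃ i : ι, v = (p i : ℤ) • Pi.single (some i) 1 - Pi.single (none : Option ι) 1 }

abbrev LGroup (ι : Type) [DecidableEq ι] (p : ι → ℕ) : Type :=
  (Option ι → ℤ) ⧸ LRel ι p

def egen {ι : Type} [DecidableEq ι] (p : ι → ℕ) (i : ι) : LGroup ι p :=
  QuotientAddGroup.mk (Pi.single (some i) 1)

def cgen {ι : Type} [DecidableEq ι] (p : ι → ℕ) : LGroup ι p :=
  QuotientAddGroup.mk (Pi.single (none : Option ι) 1)

def Lplus {ι : Type} [DecidableEq ι] (p : ι → ℕ) : AddSubmonoid (LGroup ι p) :=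
  AddSubmonoid.closure (Set.range (egen p))

abbrev SPoly (ι : Type) : Type := MvPolynomial (ι ⊕ Fin 2) ℂ

def SIdl (ι : Type) (p : ι → ℕ) (c0 c1 : ι → ℂ) : Ideal (SPoly ι) :=
  Ideal.span { f | ∃ i : ι,
    f = X (Sum.inl i) ^ (p i) - (C (c0 i) * X (Sum.inr 0) + C (c1 i) * X (Sum.inr 1)) }

abbrev SAlg (ι : Type) (p : ι → ℕ) (c0 c1 : ι → ℂ) : Type := SPoly ι ⧸ SIdl ι p c0 c1

def wtA {ι : Type} [Fintype ι] [DecidableEq ι] (p : ι → ℕ) (m : (ι ⊕ Fin 2) →₀ ℕ) :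
    LGroup ι p :=
  (∑ i : ι, m (Sum.inl i) • egen p i) + (m (Sum.inr 0) + m (Sum.inr 1)) • cgen p

def polyCompA {ι : Type} [Fintype ι] [DecidableEq ι] (p : ι → ℕ) (y : LGroup ι p) :
    Submodule ℂ (SPoly ι) where
  carrier := { f | ∀ m, coeff m f ≠ 0 → wtA p m = y }
  add_mem' := by
    intro f g hf hg m hm
    by_cases h : coeff m f = 0
    · refine hg m fun h' => hm ?_
      simp [coeff_add, h, h']
    · exact hf m h
  zero_mem' := by
    intro m hm
    simp at hm
  smul_mem' := by
    intro c f hf m hm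
    refine hf m fun h => hm ?_
    simp [coeff_smul, h]

def SCompA {ι : Type} [Fintype ι] [DecidableEq ι] (p : ι → ℕ) (c0 c1 : ι → ℂ)
    (y : LGroup ι p) : Submodule ℂ (SAlg ι p c0 c1) :=
  (polyCompA p y).map (Ideal.Quotient.mkₐ ℂ (SIdl ι p c0 c1)).toLinearMap

def SVerA {ι : Type} [Fintype ι] [DecidableEq ι] (p : ι → ℕ) (c0 c1 : ι → ℂ)
    (x : LGroup ι p) : Submodule ℂ (SAlg ι p c0 c1) :=
  ⨆ k : ℤ, SCompA p c0 c1 (k • x)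

def SShiftA {ι : Type} [Fintype ι] [DecidableEq ι] (p : ι → ℕ) (c0 c1 : ι → ℂ)
    (y x : LGroup ι p) : Submodule ℂ (SAlg ι p c0 c1) :=
  ⨆ k : ℤ, SCompA p c0 c1 (y + k • x)

section aux

variable {ι : Type} [Fintype ι] [DecidableEq ι] (p : ι → ℕ) (c0 c1 : ι → ℂ)

theorem wtA_zero : wtA p (0 : (ι ⊕ Fin 2) →₀ ℕ) = 0 := by
  simp [wtA]

theorem wtA_add (m m' : (ι ⊕ Fin 2) →₀ ℕ) : wtA p (m + m') = wtA p m + wtA p m' := by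
  simp only [wtA, Finsupp.add_apply, add_smul, Finset.sum_add_distrib]
  abel

theorem wtA_nsmul (k : ℕ) (m : (ι ⊕ Fin 2) →₀ ℕ) : wtA p (k • m) = k • wtA p m := by
  induction k with
  | zero => simp [wtA_zero]
  | succ k ih => rw [succ_nsmul, wtA_add, ih, succ_nsmul]

theorem wtA_inl (i : ι) : wtA p (Finsupp.single (Sum.inl i) 1) = egen p i := by
  simp [wtA, Finsupp.single_apply, ite_smul]

theorem wtA_inr (i : Fin 2) : wtA p (Finsupp.single (Sum.inr i) 1) = cgen p := by
  fin_cases i <;> simp [wtA, Finsupp.single_apply, ite_smul]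

theorem p_egen (i : ι) : (p i) • egen p i = cgen p := by
  have : (QuotientAddGroup.mk ((p i) • Pi.single (some i) 1) : LGroup ι p)
      = QuotientAddGroup.mk (Pi.single (none : Option ι) 1) := by
    rw [eq_comm, QuotientAddGroup.eq]
    apply AddSubgroup.subset_closure
    refine ⟨i, ?_⟩
    rw [natCast_zsmul]
    abel
  exact this

/-- The character of `L` reading the coefficient of `e_i` modulo `p_i`. -/
def chi (i : ι) : LGroup ι p →+ ZMod (p i) :=
  QuotientAddGroup.lift (LRel ι p)
    ((Int.castAddHom (ZMod (p i))).comp (Pi.evalAddMonoidHom (fun _ : Option ι => ℤ) (some i))) (by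
      unfold LRel
      rw [AddSubgroup.closure_le]
      rintro v ⟨j, rfl⟩
      by_cases h : i = j
      · subst h
        simp
      · simp [Pi.single_apply, h])

theorem chi_egen (i j : ι) : chi p i (egen p j) = if j = i then 1 else 0 := by
  show (((Pi.single (some j) 1 : Option ι → ℤ) (some i) : ℤ) : ZMod (p i)) = _
  by_cases h : j = i
  · subst h; simp
  · have : i ≠ j := fun h' => h h'.symm
    simp [Pi.single_apply, h, this]

theorem chi_cgen (i : ι) : chi p i (cgen p) = 0 := by
  show (((Pi.single none 1 : Option ι → ℤ) (some i) : ℤ) : ZMod (p i)) = _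
  simp [Pi.single_apply]

theorem chi_wtA (i : ι) (m : (ι ⊕ Fin 2) →₀ ℕ) : chi p i (wtA p m) = m (Sum.inl i) := by
  simp [wtA, chi_egen, chi_cgen]

/-- Every element of `L` is an integer combination of the generators. -/
theorem exists_rep (y : LGroup ι p) : ∃ (b : ι → ℤ) (β : ℤ),
    y = (∑ i, b i • egen p i) + β • cgen p := by
  obtain ⟨v, rfl⟩ := QuotientAddGroup.mk_surjective y
  refine ⟨fun i => v (some i), v none, ?_⟩
  have hv : v = (∑ i : ι, v (some i) • (Pi.single (some i) 1 : Option ι → ℤ))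
      + v none • Pi.single none 1 := by
    funext o
    cases o with
    | none => simp [Pi.single_apply]
    | some i => simp [Pi.single_apply]
  conv_lhs => rw [hv]
  have := map_add (QuotientAddGroup.mk' (LRel ι p))
    (∑ i : ι, v (some i) • (Pi.single (some i) 1 : Option ι → ℤ)) (v none • Pi.single none 1)
  rw [map_sum] at this
  simp only [map_zsmul] at this
  exact this

variable {G : Type} [AddCommGroup G] (q : LGroup ι p →+ G)

abbrev TAlg (_q : LGroup ι p →+ G) : Type := AddMonoidAlgebra (SAlg ι p c0 c1) G

def coactP (q : LGroup ι p →+ G) : SPoly ι →ₐ[ℂ] TAlg p c0 c1 q :=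
  aeval (fun v => AddMonoidAlgebra.single (q (wtA p (Finsupp.single v 1)))
    (Ideal.Quotient.mkₐ ℂ (SIdl ι p c0 c1) (X v)))

theorem coactP_X (q : LGroup ι p →+ G) (v) : coactP p c0 c1 q (X v) =
    AddMonoidAlgebra.single (q (wtA p (Finsupp.single v 1)))
    (Ideal.Quotient.mkₐ ℂ (SIdl ι p c0 c1) (X v)) := by
  simp [coactP]

theorem coactP_C (q : LGroup ι p →+ G) (r : ℂ) : coactP p c0 c1 q (C r) =
    AddMonoidAlgebra.single 0 (Ideal.Quotient.mkₐ ℂ (SIdl ι p c0 c1) (C r)) := by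
  rw [← MvPolynomial.algebraMap_eq, AlgHom.commutes, AlgHom.commutes]
  rfl

theorem coactP_monomial_one (q : LGroup ι p →+ G) (m : (ι ⊕ Fin 2) →₀ ℕ) :
    coactP p c0 c1 q (monomial m 1) = AddMonoidAlgebra.single (q (wtA p m))
      (Ideal.Quotient.mkₐ ℂ (SIdl ι p c0 c1) (monomial m 1)) := by
  induction m using Finsupp.induction_linear with
  | zero =>
    rw [wtA_zero, map_zero]
    exact coactP_C p c0 c1 q 1
  | add m m' h h' =>
    have : (monomial (m + m') (1 : ℂ)) = monomial m 1 * monomial m' 1 := by simp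
    rw [this, map_mul, h, h', AddMonoidAlgebra.single_mul_single, map_mul, wtA_add, map_add]
  | single v k =>
    rw [← X_pow_eq_monomial, map_pow, coactP_X, AddMonoidAlgebra.single_pow, map_pow]
    have : Finsupp.single v k = k • Finsupp.single v 1 := by simp
    rw [this, wtA_nsmul, map_nsmul]

theorem coactP_monomial (q : LGroup ι p →+ G) (m : (ι ⊕ Fin 2) →₀ ℕ) (r : ℂ) :
    coactP p c0 c1 q (monomial m r) = AddMonoidAlgebra.single (q (wtA p m))
      (Ideal.Quotient.mkₐ ℂ (SIdl ι p c0 c1) (monomial m r)) := by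
  have : (monomial m r : SPoly ι) = C r * monomial m 1 := by simp [C_mul_monomial]
  rw [this, map_mul, coactP_C, coactP_monomial_one, AddMonoidAlgebra.single_mul_single, map_mul,
    zero_add]

theorem coactP_ker (q : LGroup ι p →+ G) (f : SPoly ι) (hf : f ∈ SIdl ι p c0 c1) :
    coactP p c0 c1 q f = 0 := by
  suffices h : SIdl ι p c0 c1 ≤ RingHom.ker (coactP p c0 c1 q) from h hf
  refine Ideal.span_le.mpr ?_
  rintro g ⟨i, rfl⟩
  have hg : (Ideal.Quotient.mkₐ ℂ (SIdl ι p c0 c1)) (X (Sum.inl i) ^ (p i) -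
      (C (c0 i) * X (Sum.inr 0) + C (c1 i) * X (Sum.inr 1))) = 0 :=
    Ideal.Quotient.eq_zero_iff_mem.mpr (Ideal.subset_span ⟨i, rfl⟩)
  simp only [SetLike.mem_coe, RingHom.mem_ker, map_sub, map_add, map_mul, map_pow, coactP_X,
    coactP_C, AddMonoidAlgebra.single_mul_single, AddMonoidAlgebra.single_pow, wtA_inl, wtA_inr,
    zero_add]
  have h1 : p i • q (egen p i) = q (cgen p) := by
    rw [← p_egen p i, map_nsmul]
  rw [h1, ← AddMonoidAlgebra.single_add, ← AddMonoidAlgebra.single_sub, ← map_pow, ← map_mul,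
    ← map_mul, ← map_add, ← map_sub, hg]
  simp

/-- The coaction on `S`. -/
def coact (q : LGroup ι p →+ G) : SAlg ι p c0 c1 →ₐ[ℂ] TAlg p c0 c1 q :=
  Ideal.Quotient.liftₐ _ (coactP p c0 c1 q) (coactP_ker p c0 c1 q)

theorem coact_monomial (q : LGroup ι p →+ G) (m : (ι ⊕ Fin 2) →₀ ℕ) (r : ℂ) :
    coact p c0 c1 q (Ideal.Quotient.mkₐ ℂ (SIdl ι p c0 c1) (monomial m r)) =
    AddMonoidAlgebra.single (q (wtA p m))
      (Ideal.Quotient.mkₐ ℂ (SIdl ι p c0 c1) (monomial m r)) :=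
  coactP_monomial p c0 c1 q m r

/-- Monomials of weight `y` lie in `S_y`. -/
theorem monomial_mem (m : (ι ⊕ Fin 2) →₀ ℕ) (r : ℂ) (y : LGroup ι p) (h : wtA p m = y) :
    Ideal.Quotient.mkₐ ℂ (SIdl ι p c0 c1) (monomial m r) ∈ SCompA p c0 c1 y := by
  refine ⟨monomial m r, ?_, rfl⟩
  intro m' hm'
  rw [coeff_monomial] at hm'
  split_ifs at hm' with h'
  · rw [← h', h]
  · exact absurd rfl hm'

/-- Induction principle for `S_y`. -/
theorem SComp_le (y : LGroup ι p) (W : Submodule ℂ (SAlg ι p c0 c1))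
    (h : ∀ m : (ι ⊕ Fin 2) →₀ ℕ, wtA p m = y → ∀ r : ℂ,
      Ideal.Quotient.mkₐ ℂ (SIdl ι p c0 c1) (monomial m r) ∈ W) : SCompA p c0 c1 y ≤ W := by
  rintro _ ⟨f, hf, rfl⟩
  rw [← support_sum_monomial_coeff f, map_sum]
  refine Submodule.sum_mem _ fun m hm => h m (hf m ?_) _
  exact mem_support_iff.mp hm

theorem coact_ver (q : LGroup ι p →+ G) (x : LGroup ι p) (hq : q x = 0)
    (s : SAlg ι p c0 c1) (hs : s ∈ SVerA p c0 c1 x) :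
    coact p c0 c1 q s = AddMonoidAlgebra.single 0 s := by
  let A : SAlg ι p c0 c1 →ₗ[ℂ] TAlg p c0 c1 q :=
    { toFun := fun s => AddMonoidAlgebra.single 0 s
      map_add' := fun a b => AddMonoidAlgebra.single_add ..
      map_smul' := fun a b => by simp }
  suffices h : SVerA p c0 c1 x ≤ LinearMap.eqLocus (coact p c0 c1 q).toLinearMap A from h hs
  refine iSup_le fun k => SComp_le _ _ _ _ _ fun m hm r => ?_
  rw [LinearMap.mem_eqLocus]
  refine (coact_monomial ..).trans ?_
  rw [hm, map_zsmul, hq, smul_zero]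
  rfl

/-- The projection `S → R`. -/
def prj (q : LGroup ι p →+ G) (s : SAlg ι p c0 c1) : SAlg ι p c0 c1 := (coact p c0 c1 q s).coeff 0

theorem prj_add (q : LGroup ι p →+ G) (s t : SAlg ι p c0 c1) :
    prj p c0 c1 q (s + t) = prj p c0 c1 q s + prj p c0 c1 q t := by
  simp [prj]

theorem prj_mul (q : LGroup ι p →+ G) (x : LGroup ι p) (hq : q x = 0)
    (s t : SAlg ι p c0 c1) (ht : t ∈ SVerA p c0 c1 x) :
    prj p c0 c1 q (s * t) = prj p c0 c1 q s * t := by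
  rw [prj, map_mul, coact_ver p c0 c1 q x hq t ht, prj, AddMonoidAlgebra.coeff_mul_single_zero]

theorem prj_ver (q : LGroup ι p →+ G) (x : LGroup ι p) (hq : q x = 0)
    (t : SAlg ι p c0 c1) (ht : t ∈ SVerA p c0 c1 x) :
    prj p c0 c1 q t = t := by
  rw [prj, coact_ver p c0 c1 q x hq t ht]
  simp

theorem prj_mem (q : LGroup ι p →+ G) (x : LGroup ι p)
    (hq : ∀ y, q y = 0 → y ∈ AddSubgroup.zmultiples x) (hq0 : q x = 0) (s : SAlg ι p c0 c1) :
    prj p c0 c1 q s ∈ SVerA p c0 c1 x := by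
  obtain ⟨f, rfl⟩ := Ideal.Quotient.mkₐ_surjective ℂ (SIdl ι p c0 c1) s
  induction f using MvPolynomial.monomial_add_induction_on with
  | C r =>
    rw [prj_ver p c0 c1 q x hq0] <;>
    exact (le_iSup (fun k : ℤ => SCompA p c0 c1 (k • x)) 0)
      (monomial_mem p c0 c1 0 r _ (by simp [wtA_zero]))
  | monomial_add m r f _ _ ih =>
    rw [map_add, prj_add]
    refine Submodule.add_mem _ ?_ ih
    rw [prj, coact_monomial]
    by_cases h : q (wtA p m) = 0
    · rw [h]
      obtain ⟨k, hk⟩ := hq _ h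
      have := (le_iSup (fun k : ℤ => SCompA p c0 c1 (k • x)) k)
        (monomial_mem p c0 c1 m r _ hk.symm)
      simpa [SVerA] using this
    · classical
      rw [AddMonoidAlgebra.coeff_single, Finsupp.single_apply, if_neg h]
      exact zero_mem _


theorem gen_mult {A : Type} [AddCommGroup A] (e : ι → A) (c : A) (hpe : ∀ i, p i • e i = c)
    (hp : ∀ i, 2 ≤ p i) (x : A) (hx : ∀ m : ℤ, m ≠ 0 → m • x ≠ 0)
    (b : ι → ℤ) (β : ℤ) (hb : x = (∑ i, b i • e i) + β • c) :
    ∃ (k : ℤ) (N : ℕ), 0 < N ∧ k • x = N • c := by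
  set Q : ℕ := ∏ j, p j with hQ
  have hQ0 : Q ≠ 0 := Finset.prod_ne_zero_iff.mpr fun i _ => by have := hp i; omega
  have hQe : ∀ i, Q • e i = (∏ j ∈ Finset.univ.erase i, p j) • c := fun i => by
    rw [hQ, ← Finset.prod_erase_mul Finset.univ p (Finset.mem_univ i), mul_smul, hpe]
  have key : (Q : ℤ) • x =
      ((∑ i, b i * ((∏ j ∈ Finset.univ.erase i, p j : ℕ) : ℤ)) + Q * β) • c := by
    rw [hb, smul_add, Finset.smul_sum, add_smul, Finset.sum_smul, mul_smul]
    congr 1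
    refine Finset.sum_congr rfl fun i _ => ?_
    rw [smul_comm, natCast_zsmul, hQe, mul_smul, natCast_zsmul]
  set M := ((∑ i, b i * ((∏ j ∈ Finset.univ.erase i, p j : ℕ) : ℤ)) + Q * β) with hM
  have hM0 : M ≠ 0 := by
    intro h
    rw [h, zero_smul] at key
    exact hx Q (by exact_mod_cast hQ0) key
  rcases le_total 0 M with h | h
  · refine ⟨Q, M.natAbs, by omega, ?_⟩
    rw [key, ← natCast_zsmul, Int.natAbs_of_nonneg h]
  · refine ⟨-Q, M.natAbs, by omega, ?_⟩
    rw [neg_smul, key, ← natCast_zsmul, Int.ofNat_natAbs_of_nonpos h, neg_smul]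

theorem gen_mono {A : Type} [AddCommGroup A] (e : ι → A) (c : A) (hpe : ∀ i, p i • e i = c)
    (hp : ∀ i, 2 ≤ p i) (x : A) (K : ℤ) (N : ℕ) (hN : 0 < N) (hK : K • x = N • c)
    (i : ι) (y : A) (k0 : ℤ) (v : ι → ℤ) (γ : ℤ)
    (hv : y + k0 • x = (∑ i, v i • e i) + γ • c) (hvi : (p i : ℤ) ∣ v i) :
    ∃ (k : ℤ) (b : ι → ℕ) (β : ℕ), b i = 0 ∧ y + k • x = (∑ j, b j • e j) + β • c := by
  have hpz : ∀ j, (p j : ℤ) ≠ 0 := fun j => by have := hp j; omega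
  have hw : y + k0 • x = (∑ j, (v j % p j).toNat • e j) + ((∑ j, v j / p j) + γ) • c := by
    rw [hv, add_smul, Finset.sum_smul, ← add_assoc, ← Finset.sum_add_distrib]
    congr 1
    refine Finset.sum_congr rfl fun j _ => ?_
    rw [← natCast_zsmul (e j), Int.toNat_of_nonneg (Int.emod_nonneg _ (hpz j)), ← hpe j,
      ← natCast_zsmul, ← mul_smul, ← add_smul]
    congr 1
    rw [mul_comm]
    exact (Int.emod_add_mul_ediv _ _).symm
  set δ := (∑ j, v j / p j) + γ with hδ
  clear_value δ
  refine ⟨k0 + δ.natAbs * K, fun j => (v j % p j).toNat, (δ + N * δ.natAbs).toNat, ?_, ?_⟩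
  · have := Int.emod_eq_zero_of_dvd hvi
    simp [this]
  · have hnn : 0 ≤ δ + N * δ.natAbs := by
      have h1 : (1 : ℤ) ≤ N := by exact_mod_cast hN
      have h2 : -δ ≤ δ.natAbs := by omega
      nlinarith [Int.natCast_nonneg δ.natAbs]
    rw [← natCast_zsmul c, Int.toNat_of_nonneg hnn, add_smul, ← add_assoc, hw, mul_smul, hK,
      add_smul δ, ← add_assoc, mul_comm (N : ℤ), mul_smul, natCast_zsmul c N]

theorem exists_mult (hp : ∀ i, 2 ≤ p i) (x : LGroup ι p) (hx : ∀ m : ℤ, m ≠ 0 → m • x ≠ 0) :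
    ∃ (k : ℤ) (N : ℕ), 0 < N ∧ k • x = N • cgen p := by
  obtain ⟨b, β, hb⟩ := exists_rep p x
  exact gen_mult p (egen p) (cgen p) (p_egen p) hp x hx b β hb

theorem exists_mono (hp : ∀ i, 2 ≤ p i) (x : LGroup ι p) (hx : ∀ m : ℤ, m ≠ 0 → m • x ≠ 0)
    (i : ι) (y : LGroup ι p) (k0 : ℤ) (hk0 : chi p i (y + k0 • x) = 0) :
    ∃ (k : ℤ) (b : ι → ℕ) (β : ℕ), b i = 0 ∧
      y + k • x = (∑ j, b j • egen p j) + β • cgen p := by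
  obtain ⟨K, N, hN, hK⟩ := exists_mult p hp x hx
  obtain ⟨v, γ, hv⟩ := exists_rep p (y + k0 • x)
  refine gen_mono p (egen p) (cgen p) (p_egen p) hp x K N hN hK i y k0 v γ hv ?_
  have h1 : ((v i : ℤ) : ZMod (p i)) = 0 := by
    rw [hv] at hk0
    simpa [chi_egen, chi_cgen] using hk0
  rwa [ZMod.intCast_zmod_eq_zero_iff_dvd] at h1

/-- The exponent vector of `∏ x_j^{b_j} t_ε^β`. -/
def expo (b : ι → ℕ) (ε : Fin 2) (β : ℕ) : (ι ⊕ Fin 2) →₀ ℕ :=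
  Finsupp.equivFunOnFinite.symm (Sum.elim b (Pi.single ε β))

theorem wtA_expo (b : ι → ℕ) (ε : Fin 2) (β : ℕ) :
    wtA p (expo b ε β) = (∑ j, b j • egen p j) + β • cgen p := by
  fin_cases ε <;> simp [wtA, expo]

theorem eval_expo (u : ι ⊕ Fin 2 → ℂ) (b : ι → ℕ) (ε : Fin 2) (β : ℕ) :
    aeval u (monomial (expo b ε β) (1 : ℂ)) = (∏ j, u (Sum.inl j) ^ b j) * u (Sum.inr ε) ^ β := by
  rw [aeval_monomial, Finsupp.prod_fintype _ _ (by simp)]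
  fin_cases ε <;> simp [expo]

theorem point_zero [Nonempty ι] (hp : ∀ i, 2 ≤ p i)
    (hdist : ∀ i j : ι, i ≠ j → c0 i * c1 j ≠ c1 i * c0 j)
    (u : ι ⊕ Fin 2 → ℂ)
    (hrel : ∀ j, u (Sum.inl j) ^ p j = c0 j * u (Sum.inr 0) + c1 j * u (Sum.inr 1))
    (h : ∀ i ε, ∃ (b b' : ι → ℕ) (β β' : ℕ), b i = 0 ∧ b' i = 0 ∧
      ((∏ j, u (Sum.inl j) ^ b j) * u (Sum.inr ε) ^ β) *
      ((∏ j, u (Sum.inl j) ^ b' j) * u (Sum.inr ε) ^ β') = 0) (v) : u v = 0 := by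
  have hε : ∀ ε, u (Sum.inr ε) = 0 := by
    by_contra! hne
    obtain ⟨ε, hε⟩ := hne
    have huniq : ∀ i j, u (Sum.inl i) = 0 → u (Sum.inl j) = 0 → i = j := by
      intro i j hi hj
      by_contra hij
      have h1 := hrel i
      have h2 := hrel j
      rw [hi, zero_pow (by have := hp i; omega)] at h1
      rw [hj, zero_pow (by have := hp j; omega)] at h2
      have hd : c0 i * c1 j - c1 i * c0 j ≠ 0 := sub_ne_zero.mpr (hdist i j hij)
      have e0 : (c0 i * c1 j - c1 i * c0 j) * u (Sum.inr 0) = 0 := by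
        linear_combination (-c1 j) * h1 + c1 i * h2
      have e1 : (c0 i * c1 j - c1 i * c0 j) * u (Sum.inr 1) = 0 := by
        linear_combination c0 j * h1 - c0 i * h2
      have e0' := (mul_eq_zero.mp e0).resolve_left hd
      have e1' := (mul_eq_zero.mp e1).resolve_left hd
      fin_cases ε
      · exact hε e0'
      · exact hε e1'
    obtain ⟨i, hi⟩ : ∃ i, ∀ j, j ≠ i → u (Sum.inl j) ≠ 0 := by
      by_cases hz : ∃ i, u (Sum.inl i) = 0
      · obtain ⟨i, hi⟩ := hz
        exact ⟨i, fun j hj h0 => hj (huniq j i h0 hi)⟩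
      · push Not at hz
        exact ⟨Classical.arbitrary ι, fun j _ => hz j⟩
    obtain ⟨b, b', β, β', hb, hb', h0⟩ := h i ε
    have hprod : ∀ b : ι → ℕ, b i = 0 → (∏ j, u (Sum.inl j) ^ b j) ≠ 0 := by
      intro b hb
      refine Finset.prod_ne_zero_iff.mpr fun j _ => ?_
      by_cases hj : j = i
      · subst hj; simp [hb]
      · exact pow_ne_zero _ (hi j hj)
    exact mul_ne_zero (mul_ne_zero (hprod b hb) (pow_ne_zero _ hε))
      (mul_ne_zero (hprod b' hb') (pow_ne_zero _ hε)) h0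
  cases v with
  | inr ε => exact hε ε
  | inl j =>
    have := hrel j
    rw [hε, hε] at this
    simp only [mul_zero, add_zero] at this
    exact pow_eq_zero_iff (by have := hp j; omega) |>.mp this

/-- If an ideal of the polynomial ring has only the origin as zero, the quotient by any ideal whose
comap contains it is finite-dimensional. -/
theorem finite_of_zero {A : Type} [CommRing A] [Algebra ℂ A] (φ : SPoly ι →ₐ[ℂ] A)
    (hφ : Function.Surjective φ)
    (h : ∀ u ∈ zeroLocus ℂ (RingHom.ker φ), ∀ v, u v = 0) : Module.Finite ℂ A := by
  have hrad : ∀ v, (X v : SPoly ι) ∈ (RingHom.ker φ).radical := by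
    intro v
    rw [← vanishingIdeal_zeroLocus_eq_radical (K := ℂ)]
    intro u hu
    simpa using h u hu v
  have hIntegral : ∀ a : A, IsIntegral ℂ a := by
    intro a
    obtain ⟨f, rfl⟩ := hφ a
    induction f using MvPolynomial.induction_on with
    | C r =>
      rw [← MvPolynomial.algebraMap_eq, AlgHom.commutes]
      exact isIntegral_algebraMap
    | add f g hf hg => rw [map_add]; exact hf.add hg
    | mul_X f v hf =>
      rw [map_mul]
      refine hf.mul ?_
      obtain ⟨N, hN⟩ := hrad v
      rw [RingHom.mem_ker, map_pow] at hN
      refine ⟨Polynomial.X ^ N, Polynomial.monic_X_pow N, ?_⟩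
      simpa using hN
  have : Algebra.FiniteType ℂ A := Algebra.FiniteType.of_surjective φ hφ
  have : Algebra.IsIntegral ℂ A := ⟨hIntegral⟩
  exact Algebra.IsIntegral.finite

end aux

theorem finite_quot {ι : Type} [Fintype ι] {B : Type} [CommRing B] [Algebra ℂ B]
    (π : SPoly ι →ₐ[ℂ] B) (hπ : Function.Surjective π) (J : Ideal B)
    (h : ∀ u : ι ⊕ Fin 2 → ℂ, (∀ f, π f ∈ J → aeval u f = 0) → ∀ v, u v = 0) :
    Module.Finite ℂ (B ⧸ J) := by
  classical
  refine finite_of_zero ((Ideal.Quotient.mkₐ ℂ J).comp π)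
    ((Ideal.Quotient.mkₐ_surjective ℂ J).comp hπ) ?_
  intro u hu
  rw [mem_zeroLocus_iff] at hu
  refine h u fun f hf => hu f ?_
  rw [RingHom.mem_ker]
  exact Ideal.Quotient.eq_zero_iff_mem.mpr hf

theorem mk_rel {ι : Type} (p : ι → ℕ) (c0 c1 : ι → ℂ) (i : ι) :
    Ideal.Quotient.mkₐ ℂ (SIdl ι p c0 c1) (X (Sum.inl i) ^ (p i) -
      (C (c0 i) * X (Sum.inr 0) + C (c1 i) * X (Sum.inr 1))) = 0 :=
  Ideal.Quotient.eq_zero_iff_mem.mpr (Ideal.subset_span ⟨i, rfl⟩)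

/-- Evaluation of `S` at a point of its spectrum. -/
def evPt {ι : Type} (p : ι → ℕ) (c0 c1 : ι → ℂ) (u : ι ⊕ Fin 2 → ℂ)
    (hrel : ∀ j, u (Sum.inl j) ^ p j = c0 j * u (Sum.inr 0) + c1 j * u (Sum.inr 1)) :
    SAlg ι p c0 c1 →ₐ[ℂ] ℂ :=
  Ideal.Quotient.liftₐ _ (aeval u) (by
    intro f hf
    suffices h : SIdl ι p c0 c1 ≤ RingHom.ker (aeval u : SPoly ι →ₐ[ℂ] ℂ) from h hf
    refine Ideal.span_le.mpr ?_
    rintro g ⟨i, rfl⟩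
    simp [RingHom.mem_ker, hrel])

theorem evPt_mk {ι : Type} (p : ι → ℕ) (c0 c1 : ι → ℂ) (u : ι ⊕ Fin 2 → ℂ)
    (hrel : ∀ j, u (Sum.inl j) ^ p j = c0 j * u (Sum.inr 0) + c1 j * u (Sum.inr 1))
    (f : SPoly ι) :
    evPt p c0 c1 u hrel (Ideal.Quotient.mkₐ ℂ (SIdl ι p c0 c1) f) = aeval u f := rfl

theorem exists_quot {A : Type} [AddCommGroup A] (x : A) :
    ∃ (G : Type) (_ : AddCommGroup G) (q : A →+ G), q x = 0 ∧
      ∀ y, q y = 0 → y ∈ AddSubgroup.zmultiples x :=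
  ⟨A ⧸ AddSubgroup.zmultiples x, inferInstance, QuotientAddGroup.mk' (AddSubgroup.zmultiples x),
    (QuotientAddGroup.eq_zero_iff x).mpr (AddSubgroup.mem_zmultiples x),
    fun y hy => (QuotientAddGroup.eq_zero_iff y).mp hy⟩

/-- (ii) implies (i). -/
theorem dir_two_one {ι : Type} [Fintype ι] [DecidableEq ι] [Nonempty ι] (p : ι → ℕ)
    (hp : ∀ i, 2 ≤ p i) (c0 c1 : ι → ℂ)
    (hdist : ∀ i j : ι, i ≠ j → c0 i * c1 j ≠ c1 i * c0 j)
    (x : LGroup ι p) (hx : ∀ m : ℤ, m ≠ 0 → m • x ≠ 0)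
    (hu : ∀ i, IsUnit (chi p i x))
    (R : Subalgebra ℂ (SAlg ι p c0 c1))
    (hR : Subalgebra.toSubmodule R = SVerA p c0 c1 x) (z : LGroup ι p)
    (I : Ideal R) (hI : I = Ideal.span { w : ↥R | ∃ s ∈ SShiftA p c0 c1 z x,
              ∃ t ∈ SShiftA p c0 c1 (-z) x, (w : SAlg ι p c0 c1) = s * t }) :
    Module.Finite ℂ (R ⧸ I) := by
  have hRm : ∀ s, s ∈ R ↔ s ∈ SVerA p c0 c1 x := fun s => by
    rw [← hR, Subalgebra.mem_toSubmodule]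
  let J : Ideal (SAlg ι p c0 c1) := I.map R.val
  obtain ⟨G, _, q, hq0, hq⟩ := exists_quot x
  -- contraction
  have hJ : ∀ s ∈ J, ∀ a, ∃ w ∈ I, (w : SAlg ι p c0 c1) = prj p c0 c1 q (a * s) := by
    intro s hs
    induction hs using Submodule.span_induction with
    | mem s hs =>
      obtain ⟨w, hw, rfl⟩ := hs
      intro a
      refine ⟨⟨_, (hRm _).mpr (prj_mem p c0 c1 q x hq hq0 a)⟩ * w, I.mul_mem_left _ hw, ?_⟩
      exact (prj_mul p c0 c1 q x hq0 a w ((hRm _).mp w.2)).symm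
    | zero =>
      intro a
      exact ⟨0, I.zero_mem, by simp [prj]⟩
    | add s t _ _ hs ht =>
      intro a
      obtain ⟨w, hw, h⟩ := hs a
      obtain ⟨w', hw', h'⟩ := ht a
      refine ⟨w + w', I.add_mem hw hw', ?_⟩
      rw [mul_add, prj_add, ← h, ← h']
      rfl
    | smul b s _ hs =>
      intro a
      obtain ⟨w, hw, h⟩ := hs (a * b)
      exact ⟨w, hw, by rw [h, smul_eq_mul, mul_assoc]⟩
  have hcomap : J.comap R.val ≤ I := by
    intro r hr
    obtain ⟨w, hw, h⟩ := hJ _ hr 1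
    rw [one_mul] at h
    have h2 : prj p c0 c1 q (R.val r) = r := prj_ver p c0 c1 q x hq0 _ ((hRm _).mp r.2)
    rw [h2] at h
    have : w = r := Subtype.ext h
    exact this ▸ hw
  have hfin : Module.Finite ℂ (SAlg ι p c0 c1 ⧸ J) := by
    refine finite_quot (Ideal.Quotient.mkₐ ℂ (SIdl ι p c0 c1))
      (Ideal.Quotient.mkₐ_surjective ℂ _) J ?_
    intro u hu0
    refine point_zero p c0 c1 hp hdist u ?_ ?_
    · intro j
      have := hu0 (X (Sum.inl j) ^ (p j) -
        (C (c0 j) * X (Sum.inr 0) + C (c1 j) * X (Sum.inr 1))) (by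
          rw [mk_rel]
          exact J.zero_mem)
      simpa [sub_eq_zero] using this
    · intro i ε
      have hex : ∀ y : LGroup ι p, ∃ k0 : ℤ, chi p i (y + k0 • x) = 0 := by
        intro y
        obtain ⟨w, hw⟩ := (hu i).exists_left_inv
        obtain ⟨k0, hk0⟩ := ZMod.intCast_surjective (-(chi p i y) * w)
        refine ⟨k0, ?_⟩
        rw [map_add, map_zsmul, zsmul_eq_mul, hk0, mul_assoc, hw]
        ring
      obtain ⟨k0, hk0⟩ := hex z
      obtain ⟨k0', hk0'⟩ := hex (-z)
      obtain ⟨k, b, β, hb, hkb⟩ := exists_mono p hp x hx i z k0 hk0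
      obtain ⟨k', b', β', hb', hkb'⟩ := exists_mono p hp x hx i (-z) k0' hk0'
      refine ⟨b, b', β, β', hb, hb', ?_⟩
      rw [← eval_expo, ← eval_expo, ← map_mul]
      apply hu0
      rw [map_mul]
      have hs : Ideal.Quotient.mkₐ ℂ (SIdl ι p c0 c1) (monomial (expo b ε β) 1) ∈
          SCompA p c0 c1 (z + k • x) :=
        monomial_mem p c0 c1 _ 1 _ ((wtA_expo p b ε β).trans hkb.symm)
      have ht : Ideal.Quotient.mkₐ ℂ (SIdl ι p c0 c1) (monomial (expo b' ε β') 1) ∈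
          SCompA p c0 c1 (-z + k' • x) :=
        monomial_mem p c0 c1 _ 1 _ ((wtA_expo p b' ε β').trans hkb'.symm)
      have hst : Ideal.Quotient.mkₐ ℂ (SIdl ι p c0 c1) (monomial (expo b ε β) 1) *
          Ideal.Quotient.mkₐ ℂ (SIdl ι p c0 c1) (monomial (expo b' ε β') 1) ∈ R := by
        rw [hRm, ← map_mul, monomial_mul, one_mul]
        refine (le_iSup (fun k : ℤ => SCompA p c0 c1 (k • x)) (k + k'))
          (monomial_mem p c0 c1 _ 1 _ ?_)
        rw [wtA_add, wtA_expo, wtA_expo, ← hkb, ← hkb']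
        have gen : ∀ {A : Type} [AddCommGroup A] (z x : A),
          z + k • x + (-z + k' • x) = (k + k') • x := by
          intro A _ z x
          rw [add_smul]; abel
        exact gen z x
      have hmem : (⟨_, hst⟩ : R) ∈ I := by
        rw [hI]
        exact Ideal.subset_span ⟨_, (le_iSup (fun k : ℤ => SCompA p c0 c1 (z + k • x)) k) hs,
          _, (le_iSup (fun k : ℤ => SCompA p c0 c1 (-z + k • x)) k') ht, rfl⟩
      exact Ideal.mem_map_of_mem R.val hmem
  let ψ : (R ⧸ I) →ₐ[ℂ] (SAlg ι p c0 c1 ⧸ J) :=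
    Ideal.quotientMapₐ J R.val Ideal.le_comap_map
  have hψ : Function.Injective ψ := Ideal.quotientMap_injective' (H := Ideal.le_comap_map) hcomap
  exact Module.Finite.of_injective ψ.toLinearMap hψ

/-- (i) implies (ii). -/
theorem dir_one_two {ι : Type} [Fintype ι] [DecidableEq ι] (p : ι → ℕ)
    (hp : ∀ i, 2 ≤ p i) (c0 c1 : ι → ℂ) (hnz : ∀ i, (c0 i, c1 i) ≠ (0, 0))
    (x : LGroup ι p) (hx : ∀ m : ℤ, m ≠ 0 → m • x ≠ 0) (i : ι)
    (R : Subalgebra ℂ (SAlg ι p c0 c1))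
    (hR : Subalgebra.toSubmodule R = SVerA p c0 c1 x)
    (I : Ideal R) (hI : I = Ideal.span { w : ↥R | ∃ s ∈ SShiftA p c0 c1 (egen p i) x,
              ∃ t ∈ SShiftA p c0 c1 (-(egen p i)) x, (w : SAlg ι p c0 c1) = s * t })
    (hfin : Module.Finite ℂ (R ⧸ I)) : IsUnit (chi p i x) := by
  by_contra hnu
  have hRm : ∀ s, s ∈ R ↔ s ∈ SVerA p c0 c1 x := fun s => by
    rw [← hR, Subalgebra.mem_toSubmodule]
  obtain ⟨K, N, hN, hK⟩ := exists_mult p hp x hx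
  -- a direction in which `ℓ_i` vanishes
  obtain ⟨d, hd, ε, hε⟩ : ∃ d : Fin 2 → ℂ, c0 i * d 0 + c1 i * d 1 = 0 ∧ ∃ ε, d ε ≠ 0 := by
    refine ⟨![c1 i, -c0 i], by simp; ring, ?_⟩
    by_contra! h
    have h0 := h 0
    have h1 := h 1
    simp at h0 h1
    exact hnz i (by rw [h0, h1])
  let f : SAlg ι p c0 c1 := Ideal.Quotient.mkₐ ℂ (SIdl ι p c0 c1) (monomial (expo 0 ε N) 1)
  have hf : f ∈ R := by
    rw [hRm]
    refine (le_iSup (fun k : ℤ => SCompA p c0 c1 (k • x)) K) (monomial_mem p c0 c1 _ 1 _ ?_)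
    rw [wtA_expo, hK]
    simp
  have hIntegral : Algebra.IsIntegral ℂ (R ⧸ I) := Algebra.IsIntegral.of_finite ℂ (R ⧸ I)
  obtain ⟨P, hP, hP0⟩ := hIntegral.isIntegral (Ideal.Quotient.mkₐ ℂ I ⟨f, hf⟩)
  have hPI : Polynomial.aeval (⟨f, hf⟩ : R) P ∈ I := by
    rw [← Ideal.Quotient.eq_zero_iff_mem]
    have h1 : Polynomial.aeval (Ideal.Quotient.mkₐ ℂ I ⟨f, hf⟩) P = 0 := hP0
    rw [Polynomial.aeval_algHom_apply] at h1
    exact h1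
  apply hP.ne_zero
  refine Polynomial.funext fun r => ?_
  rw [Polynomial.eval_zero]
  obtain ⟨r', hr'⟩ := IsAlgClosed.exists_pow_nat_eq r hN
  have hroot : ∀ j, ∃ w : ℂ, w ^ p j = c0 j * (r' / d ε * d 0) + c1 j * (r' / d ε * d 1) :=
    fun j => IsAlgClosed.exists_pow_nat_eq _ (by have := hp j; omega)
  choose w hw using hroot
  have hwi : w i = 0 := by
    have h1 := hw i
    have h2 : c0 i * (r' / d ε * d 0) + c1 i * (r' / d ε * d 1) = 0 := by
      linear_combination (r' / d ε) * hd
    rw [h2] at h1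
    exact pow_eq_zero_iff (by have := hp i; omega) |>.mp h1
  let u : ι ⊕ Fin 2 → ℂ := Sum.elim w (fun e => r' / d ε * d e)
  let E := evPt p c0 c1 u hw
  have hkill : ∀ s ∈ SShiftA p c0 c1 (egen p i) x, E s = 0 := by
    intro s hs
    suffices h : SShiftA p c0 c1 (egen p i) x ≤ LinearMap.ker E.toLinearMap from h hs
    refine iSup_le fun k => SComp_le _ _ _ _ _ fun m hm r => ?_
    rw [LinearMap.mem_ker]
    show aeval u (monomial m r) = 0
    have hmi : m (Sum.inl i) ≠ 0 := by
      intro h0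
      have h1 := chi_wtA p i m
      rw [hm, h0, map_add, map_zsmul, chi_egen, if_pos rfl, zsmul_eq_mul, Nat.cast_zero] at h1
      apply hnu
      refine IsUnit.of_mul_eq_one (-(k : ZMod (p i))) ?_
      linear_combination -h1
    rw [aeval_monomial, Finsupp.prod_fintype _ _ (by simp)]
    rw [Finset.prod_eq_zero (Finset.mem_univ (Sum.inl i)), mul_zero]
    show w i ^ _ = 0
    rw [hwi, zero_pow hmi]
  have hIk : ∀ g ∈ I, E (g : SAlg ι p c0 c1) = 0 := by
    intro g hg
    suffices h : I ≤ RingHom.ker (E.comp R.val) from h hg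
    rw [hI]
    refine Ideal.span_le.mpr ?_
    rintro g ⟨s, hs, t, ht, hst⟩
    show E (g : SAlg ι p c0 c1) = 0
    rw [hst, map_mul, hkill s hs, zero_mul]
  have h1 := hIk _ hPI
  have h2 : (E.comp R.val) (Polynomial.aeval (⟨f, hf⟩ : R) P) = 0 := h1
  rw [← Polynomial.aeval_algHom_apply] at h2
  have h3 : (E.comp R.val) ⟨f, hf⟩ = r := by
    show aeval u (monomial (expo 0 ε N) 1) = r
    rw [eval_expo]
    simp only [Pi.zero_apply, pow_zero, Finset.prod_const_one, one_mul]
    show (r' / d ε * d ε) ^ N = r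
    rw [div_mul_cancel₀ _ hε, hr']
  rw [h3] at h2
  simpa using h2

/-- For a non-torsion `x ∈ L` with normal form
`x = a₁e₁ + ⋯ + aₙeₙ + a·c`, the ideals `I^z := S(z)^x · S(−z)^x` of `R := S^x` are
all of finite codimension if and only if `gcd(pᵢ, aᵢ) = 1` for all `i`. -/
theorem veronese_cofinite_iff_coprime (n : ℕ) (hn : 1 ≤ n) (p : Fin n → ℕ)
    (hp : ∀ i, 2 ≤ p i)
    (c0 c1 : Fin n → ℂ) (hnz : ∀ i, (c0 i, c1 i) ≠ (0, 0))
    (hdist : ∀ i j : Fin n, i ≠ j → c0 i * c1 j ≠ c1 i * c0 j)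
    (x : LGroup (Fin n) p) (hx : ∀ m : ℤ, m ≠ 0 → m • x ≠ 0)
    (a : Fin n → ℕ) (ha : ∀ i, a i < p i) (aZ : ℤ)
    (hxnf : x = (∑ i, a i • egen p i) + aZ • cgen p)
    (R : Subalgebra ℂ (SAlg (Fin n) p c0 c1))
    (hR : Subalgebra.toSubmodule R = SVerA p c0 c1 x) :
    (∀ z : LGroup (Fin n) p,
        FiniteDimensional ℂ
          (↥R ⧸ Ideal.span { w : ↥R | ∃ s ∈ SShiftA p c0 c1 z x,
              ∃ t ∈ SShiftA p c0 c1 (-z) x, (w : SAlg (Fin n) p c0 c1) = s * t })) ↔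
      ∀ i, Nat.gcd (p i) (a i) = 1 := by
  have hchi : ∀ i, chi p i x = ((a i : ℕ) : ZMod (p i)) := by
    intro i
    rw [hxnf]
    simp [chi_egen, chi_cgen]
  have hunit : ∀ i, IsUnit (chi p i x) ↔ Nat.gcd (p i) (a i) = 1 := by
    intro i
    rw [hchi, ZMod.isUnit_iff_coprime, Nat.coprime_comm, Nat.coprime_iff_gcd_eq_one]
  have hne : Nonempty (Fin n) := ⟨⟨0, hn⟩⟩
  constructor
  · intro h i
    rw [← hunit]
    exact dir_one_two p hp c0 c1 hnz x hx i R hR _ rfl (h (egen p i))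
  · intro h z
    exact dir_two_one p hp c0 c1 hdist x hx (fun i => (hunit i).mpr (h i)) R hR z _ rfl
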